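/- The harmonic based exponential function y(x) = ₕe(x) is differentiable on ℝ \ {0} and satisfies there the differential equation y'(x) = y(x) + (e^x - 1 - x)/x. -/

import Mathlib

open Real MeasureTheory

/-- The `n`-th harmonic number `h_n = ∑_{r=1}^n 1/r`. -/
noncomputable def harm (n : ℕ) : ℝ := ∑ r ∈ Finset.range n, 1 / (r + 1 : ℝ)

/-- The harmonic based exponential function `ₕe(x) = 1 + ∑_{n=1}^∞ h_n x^n / n!`. -/
noncomputable def he (x : ℝ) : ℝ :=
  1 + ∑' n : ℕ, harm (n + 1) * x ^ (n + 1) / (Nat.factorial (n + 1) : ℝ)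

/-!
Differentiating an exponential generating function `∑ aₙ xⁿ / n!` shifts its coefficients. Since
`hₙ₊₁ = hₙ + 1 / (n + 1)`, the derivative of `ₕe` is `ₕe - 1` plus the generating function of
`1 / (n + 1)`, which is `(eˣ - 1) / x`.
-/

open scoped Nat

/-- The sequence `a` grows at most geometrically, which makes its exponential generating function
converge everywhere. -/
def HasGeometricGrowth {E : Type*} [Norm E] (a : ℕ → E) : Prop :=
  ∃ C r : ℝ, ∀ n, ‖a n‖ ≤ C * r ^ n

namespace HasGeometricGrowth

variable {E : Type*} [Norm E] {a : ℕ → E}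

lemma of_norm_le {C : ℝ} (hbound : ∀ n, ‖a n‖ ≤ C) : HasGeometricGrowth a :=
  ⟨C, 1, by simpa using hbound⟩

lemma shift (ha : HasGeometricGrowth a) : HasGeometricGrowth fun n ↦ a (n + 1) := by
  obtain ⟨C, r, hbound⟩ := ha
  exact ⟨C * r, r, fun n ↦ (hbound (n + 1)).trans_eq (by ring)⟩

end HasGeometricGrowth

section ExpGenFun

variable {𝕜 : Type*} [RCLike 𝕜]

/-- The exponential generating function `∑ aₙ xⁿ / n!` of the sequence `a`, with value `0` at points
where the series does not converge. -/
noncomputable def expGenFun (a : ℕ → 𝕜) (x : 𝕜) : 𝕜 := ∑' n : ℕ, a n * x ^ n / (n ! : 𝕜)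

lemma norm_mul_pow_div_factorial_le {c x : 𝕜} {C r R : ℝ} {n : ℕ} (hc : ‖c‖ ≤ C * r ^ n)
    (hx : ‖x‖ ≤ R) : ‖c * x ^ n / (n ! : 𝕜)‖ ≤ C * ((r * R) ^ n / n !) := by
  have hCr : 0 ≤ C * r ^ n := (norm_nonneg c).trans hc
  calc ‖c * x ^ n / (n ! : 𝕜)‖ = ‖c‖ * ‖x‖ ^ n / n ! := by
        rw [norm_div, norm_mul, norm_pow, RCLike.norm_natCast]
    _ ≤ C * r ^ n * R ^ n / n ! := by gcongr
    _ = C * ((r * R) ^ n / n !) := by ring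

lemma HasGeometricGrowth.summable_expGenFun {a : ℕ → 𝕜} (ha : HasGeometricGrowth a) (x : 𝕜) :
    Summable fun n : ℕ ↦ a n * x ^ n / (n ! : 𝕜) := by
  obtain ⟨C, r, hbound⟩ := ha
  exact .of_norm_bounded ((summable_pow_div_factorial (r * ‖x‖)).mul_left C)
    fun n ↦ norm_mul_pow_div_factorial_le (hbound n) le_rfl

variable {a b : ℕ → 𝕜}

lemma expGenFun_add (ha : HasGeometricGrowth a) (hb : HasGeometricGrowth b) (x : 𝕜) :
    expGenFun (fun n ↦ a n + b n) x = expGenFun a x + expGenFun b x := by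
  simp only [expGenFun, add_mul, add_div]
  exact (ha.summable_expGenFun x).tsum_add (hb.summable_expGenFun x)

lemma expGenFun_eq_zero_add (ha : HasGeometricGrowth a) (x : 𝕜) :
    expGenFun a x = a 0 + ∑' n : ℕ, a (n + 1) * x ^ (n + 1) / ((n + 1)! : 𝕜) := by
  simpa [expGenFun] using (ha.summable_expGenFun x).tsum_eq_zero_add

lemma expGenFun_eq_zero_add_mul (ha : HasGeometricGrowth a) (x : 𝕜) :
    expGenFun a x = a 0 + x * expGenFun (fun n ↦ a (n + 1) / (n + 1)) x := by
  rw [expGenFun_eq_zero_add ha, expGenFun, ← tsum_mul_left]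
  congr! 3 with n
  rw [Nat.factorial_succ]
  push_cast
  field_simp
  ring

lemma hasDerivAt_mul_pow_div_factorial (c x : 𝕜) (n : ℕ) :
    HasDerivAt (fun z ↦ c * z ^ (n + 1) / ((n + 1)! : 𝕜)) (c * x ^ n / (n ! : 𝕜)) x := by
  refine (((hasDerivAt_pow (n + 1) x).const_mul c).div_const ((n + 1)! : 𝕜)).congr_deriv ?_
  rw [Nat.factorial_succ, Nat.add_sub_cancel]
  push_cast
  field_simp

theorem hasDerivAt_expGenFun (ha : HasGeometricGrowth a) (x : 𝕜) :
    HasDerivAt (expGenFun a) (expGenFun (fun n ↦ a (n + 1)) x) x := by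
  obtain ⟨C, r, hbound⟩ := ha.shift
  have hx : x ∈ Metric.ball (0 : 𝕜) (‖x‖ + 1) := by simp
  have hmajorant : Summable fun n : ℕ ↦ C * ((r * (‖x‖ + 1)) ^ n / n !) :=
    (summable_pow_div_factorial _).mul_left C
  have hsummable : Summable fun n : ℕ ↦ a (n + 1) * x ^ (n + 1) / ((n + 1)! : 𝕜) :=
    (summable_nat_add_iff (f := fun n : ℕ ↦ a n * x ^ n / (n ! : 𝕜)) 1).2 (ha.summable_expGenFun x)
  have htail : HasDerivAt (fun z ↦ ∑' n : ℕ, a (n + 1) * z ^ (n + 1) / ((n + 1)! : 𝕜))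
      (expGenFun (fun n ↦ a (n + 1)) x) x :=
    hasDerivAt_tsum_of_isPreconnected (g' := fun n z ↦ a (n + 1) * z ^ n / (n ! : 𝕜))
      hmajorant Metric.isOpen_ball Metric.isPreconnected_ball
      (fun n z _ ↦ hasDerivAt_mul_pow_div_factorial (a (n + 1)) z n)
      (fun n z hz ↦ norm_mul_pow_div_factorial_le (hbound n) (mem_ball_zero_iff.mp hz).le)
      hx hsummable hx
  rw [funext (expGenFun_eq_zero_add ha)]
  exact htail.const_add (a 0)

lemma expGenFun_one (x : 𝕜) : expGenFun (fun _ ↦ 1) x = NormedSpace.exp x := by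
  simp only [expGenFun, one_mul, NormedSpace.exp_eq_tsum_div]

lemma expGenFun_one_div_succ {x : 𝕜} (hx : x ≠ 0) :
    expGenFun (fun n : ℕ ↦ 1 / (n + 1 : 𝕜)) x = (NormedSpace.exp x - 1) / x := by
  have hone : HasGeometricGrowth fun _ ↦ (1 : 𝕜) := .of_norm_le fun _ ↦ norm_one.le
  rw [eq_div_iff hx, ← expGenFun_one, expGenFun_eq_zero_add_mul hone, add_sub_cancel_left, mul_comm]

lemma hasGeometricGrowth_one_div_succ : HasGeometricGrowth fun n : ℕ ↦ 1 / (n + 1 : 𝕜) := by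
  refine .of_norm_le (C := 1) fun n ↦ ?_
  rw [← Nat.cast_succ, norm_div, norm_one, RCLike.norm_natCast]
  exact div_le_one_of_le₀ (by simp) (by positivity)

end ExpGenFun

lemma harm_zero : harm 0 = 0 := Finset.sum_range_zero _

lemma harm_succ (n : ℕ) : harm (n + 1) = harm n + 1 / (n + 1 : ℝ) := Finset.sum_range_succ _ _

lemma harm_nonneg (n : ℕ) : 0 ≤ harm n := Finset.sum_nonneg fun _ _ ↦ by positivity

lemma harm_le_self (n : ℕ) : harm n ≤ n := by
  have h : harm n ≤ (Finset.range n).card • (1 : ℝ) :=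
    Finset.sum_le_card_nsmul _ _ _ fun r _ ↦ div_le_one_of_le₀ (by simp) (by positivity)
  simpa using h

lemma hasGeometricGrowth_harm : HasGeometricGrowth harm := by
  refine ⟨1, 2, fun n ↦ ?_⟩
  calc ‖harm n‖ = harm n := norm_of_nonneg (harm_nonneg n)
    _ ≤ n := harm_le_self n
    _ ≤ 2 ^ n := mod_cast Nat.lt_two_pow_self.le
    _ = 1 * 2 ^ n := (one_mul _).symm

lemma he_eq_one_add_expGenFun (x : ℝ) : he x = 1 + expGenFun harm x := by
  rw [he, expGenFun_eq_zero_add hasGeometricGrowth_harm, harm_zero, zero_add]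

theorem hasDerivAt_he (x : ℝ) :
    HasDerivAt he (he x - 1 + expGenFun (fun n : ℕ ↦ 1 / (n + 1 : ℝ)) x) x := by
  have hderiv := (hasDerivAt_expGenFun hasGeometricGrowth_harm x).const_add 1
  rw [← funext he_eq_one_add_expGenFun] at hderiv
  refine hderiv.congr_deriv ?_
  simp only [harm_succ]
  rw [expGenFun_add hasGeometricGrowth_harm hasGeometricGrowth_one_div_succ,
    he_eq_one_add_expGenFun, add_sub_cancel_left]

/-- `ₕe` is differentiable away from `0` and satisfies
`y' = y + (e^x - 1 - x)/x` there. -/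
theorem he_ode (x : ℝ) (hx : x ≠ 0) :
    DifferentiableAt ℝ he x ∧
    deriv he x = he x + (Real.exp x - 1 - x) / x := by
  refine ⟨(hasDerivAt_he x).differentiableAt, ?_⟩
  rw [(hasDerivAt_he x).deriv, expGenFun_one_div_succ hx, ← exp_eq_exp_ℝ,
    sub_div _ x, div_self hx]
  ring
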